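/- Let n ≥ 3, let q_n = ((−1)^{n+1} + 2ⁿ)/3, and define the utility vector m on [n+1] by m_i = 2^i for 1 ≤ i ≤ n−2, m_{n−1} = q_n, m_n = 2^{n−1}, m_{n+1} = 2ⁿ. Then all subset sums u(A) = ∑_{i∈A} m_i, A ⊆ [n+1], are pairwise distinct, the order ≼_m on subsets of [n+1] defined by A ≼_m B ⇔ u(A) ≤ u(B) is a comparative probability order, and ≼_m has exactly F_{n+2} flippable pairs, where F denotes the Fibonacci sequence with F₁ = F₂ = 1. -/

import Mathlib

open Finset

/-- The strict part of a (total antisymmetric) order on subsets. -/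
def cpLT {n : ℕ} (le : Finset (Fin n) → Finset (Fin n) → Prop)
    (A B : Finset (Fin n)) : Prop :=
  le A B ∧ A ≠ B

/-- `le` is a comparative probability order on `[n]`: a linear (total,
antisymmetric, transitive) order on the powerset of `[n]` with `∅ ≺ A` for
nonempty `A`, satisfying de Finetti's axiom. -/
def IsCPO {n : ℕ} (le : Finset (Fin n) → Finset (Fin n) → Prop) : Prop :=
  (∀ A B, le A B ∨ le B A) ∧
  (∀ A B, le A B → le B A → A = B) ∧
  (∀ A B C, le A B → le B C → le A C) ∧
  (∀ A : Finset (Fin n), A ≠ ∅ → cpLT le ∅ A) ∧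
  (∀ A B C : Finset (Fin n), Disjoint (A ∪ B) C → (le A B ↔ le (A ∪ C) (B ∪ C)))

/-- `(A,B)` is a critical pair: disjoint, `A ≺ B`, and no `C` with `A ≺ C ≺ B`. -/
def Critical {n : ℕ} (le : Finset (Fin n) → Finset (Fin n) → Prop)
    (A B : Finset (Fin n)) : Prop :=
  Disjoint A B ∧ cpLT le A B ∧ ¬ ∃ C, cpLT le A C ∧ cpLT le C B

/-- `(A,B)` is a flippable pair: critical, and for every `D` disjoint from
`A ∪ B` the pair `(A ∪ D, B ∪ D)` is adjacent. -/
def Flippable {n : ℕ} (le : Finset (Fin n) → Finset (Fin n) → Prop)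
    (A B : Finset (Fin n)) : Prop :=
  Critical le A B ∧
  ∀ D : Finset (Fin n), Disjoint D (A ∪ B) →
    ¬ ∃ C, cpLT le (A ∪ D) C ∧ cpLT le C (B ∪ D)

/-- The set of flippable pairs of an order. -/
def FlippablePairs {n : ℕ} (le : Finset (Fin n) → Finset (Fin n) → Prop) :
    Set (Finset (Fin n) × Finset (Fin n)) :=
  {p | Flippable le p.1 p.2}

/-- `le` is (additively) representable by a positive utility vector. -/
def Representable {n : ℕ} (le : Finset (Fin n) → Finset (Fin n) → Prop) : Prop :=
  ∃ u : Fin n → ℝ, (∀ i, 0 < u i) ∧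
    ∀ A B : Finset (Fin n), le A B ↔ ∑ i ∈ A, u i ≤ ∑ i ∈ B, u i

/-- `(X, Y) = (A ∪ D, B ∪ D)` for some `D` disjoint from `A ∪ B`. -/
def FlipRel {n : ℕ} (A B X Y : Finset (Fin n)) : Prop :=
  ∃ D : Finset (Fin n), Disjoint D (A ∪ B) ∧ X = A ∪ D ∧ Y = B ∪ D

/-- The relation obtained from `le` by flipping over the pair `(A,B)`:
all comparisons between `A ∪ D` and `B ∪ D` (for `D` disjoint from `A ∪ B`)
are reversed, all other comparisons are kept. -/
def flipOrder {n : ℕ} (le : Finset (Fin n) → Finset (Fin n) → Prop)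
    (A B : Finset (Fin n)) : Finset (Fin n) → Finset (Fin n) → Prop :=
  fun X Y => (le X Y ∧ ¬ FlipRel A B X Y) ∨ FlipRel A B Y X

/-- Utility (sum of weights) of a subset. -/
def usum {k : ℕ} (m : Fin k → ℕ) (A : Finset (Fin k)) : ℕ := ∑ i ∈ A, m i

/-- The order on subsets induced by a utility vector. -/
def uord {k : ℕ} (m : Fin k → ℕ) : Finset (Fin k) → Finset (Fin k) → Prop :=
  fun A B => usum m A ≤ usum m B

/-- `qn n = ((−1)^(n+1) + 2^n) / 3` as a natural number. -/
def qn (n : ℕ) : ℕ := if n % 2 = 1 then (2 ^ n + 1) / 3 else (2 ^ n - 1) / 3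

/-- The utility vector `m` on `[n+1]` (element `k` corresponds to index `k-1`):
`m_k = 2^k` for `1 ≤ k ≤ n−2`, `m_{n−1} = qn n`, `m_n = 2^(n−1)`, `m_{n+1} = 2^n`. -/
def mvec (n : ℕ) : Fin (n + 1) → ℕ := fun i =>
  if (i : ℕ) + 1 ≤ n - 2 then 2 ^ ((i : ℕ) + 1)
  else if (i : ℕ) + 1 = n - 1 then qn n
  else if (i : ℕ) + 1 = n then 2 ^ (n - 1)
  else 2 ^ n

/-!
If `q` is odd and `q ≤ 2 ^ n`, insert `q` among the weights `2, 4, …, 2 ^ n`. Subset sums are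
distinct because their parity tells whether `q` is used and binary expansions are unique. The sums
of each parity form a full interval of that parity, so neighbouring sums differ by `1` or `2`;
a difference `2` is destroyed by adding `q` to both sides, so the flippable pairs are exactly the
disjoint pairs whose sums differ by `1`. These are the representations of `1` by the weights with
digits in `{-1, 0, 1}`. Exchanging the roles of the odd numbers `1` and `q` turns them into the
representations of `q` by the weights `1, 2, 4, …, 2 ^ n`. The number `s k N` of representations of
`N` by `k` signed binary digits satisfies `s (k + 1) (2 * N) = s k N` and
`s (k + 1) (2 * N + 1) = s k N + s k (N + 1)`, and along the Jacobsthal numbers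
`qn (n + 1) = 2 * qn n ± 1`, with alternating sign, this is the Fibonacci recurrence.
-/

section InducedOrder

variable {k : ℕ} {m : Fin k → ℕ}

lemma usum_union_of_disjoint {A B : Finset (Fin k)} (h : Disjoint A B) :
    usum m (A ∪ B) = usum m A + usum m B :=
  sum_union h

lemma isCPO_uord_of_injective (hm : Function.Injective (usum m)) : IsCPO (uord m) := by
  refine ⟨fun A B => le_total _ _, fun A B hAB hBA => hm (le_antisymm hAB hBA),
    fun A B C => le_trans, fun A hA => ⟨by simp [uord, usum], hA.symm⟩, fun A B C hC => ?_⟩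
  rw [disjoint_union_left] at hC
  simp only [uord, usum_union_of_disjoint hC.1, usum_union_of_disjoint hC.2,
    add_le_add_iff_right]

lemma cpLT_uord_iff (hm : Function.Injective (usum m)) (A B : Finset (Fin k)) :
    cpLT (uord m) A B ↔ usum m A < usum m B := by
  rw [cpLT, uord, lt_iff_le_and_ne, hm.ne_iff]

lemma flippable_uord_iff (hm : Function.Injective (usum m)) (A B : Finset (Fin k)) :
    Flippable (uord m) A B ↔ Disjoint A B ∧ usum m A < usum m B ∧
      ∀ D, Disjoint D (A ∪ B) → ∀ x ∈ Set.range (usum m),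
        ¬(usum m A + usum m D < x ∧ x < usum m B + usum m D) := by
  have between_iff (D : Finset (Fin k)) (hD : Disjoint D (A ∪ B)) :
      (¬∃ C, cpLT (uord m) (A ∪ D) C ∧ cpLT (uord m) C (B ∪ D)) ↔
        ∀ x ∈ Set.range (usum m), ¬(usum m A + usum m D < x ∧ x < usum m B + usum m D) := by
    rw [disjoint_union_right] at hD
    simp only [cpLT_uord_iff hm, usum_union_of_disjoint hD.1.symm,
      usum_union_of_disjoint hD.2.symm, Set.forall_mem_range, not_exists]
  have critical_iff := between_iff ∅ (disjoint_empty_left _)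
  simp only [union_empty] at critical_iff
  rw [Flippable, Critical, cpLT_uord_iff hm A B, critical_iff]
  constructor
  · rintro ⟨⟨hdisj, hlt, -⟩, hadj⟩
    exact ⟨hdisj, hlt, fun D hD => (between_iff D hD).1 (hadj D hD)⟩
  · rintro ⟨hdisj, hlt, hadj⟩
    exact ⟨⟨hdisj, hlt, hadj ∅ (disjoint_empty_left _)⟩,
      fun D hD => (between_iff D hD).2 (hadj D hD)⟩

end InducedOrder

section SignSupports

variable {ι : Type*} [Fintype ι]

/-- The disjoint pair of sets encoded by a vector of signs: the indices of its negative and of its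
positive entries. -/
def signSupports (ε : ι → SignType) : Finset ι × Finset ι :=
  (univ.filter fun i => ε i = -1, univ.filter fun i => ε i = 1)

lemma signSupports_injective : Function.Injective (signSupports (ι := ι)) := by
  intro ε δ h
  simp only [signSupports, Prod.mk.injEq, Finset.ext_iff, mem_filter_univ] at h
  have eq_of_iff : ∀ s t : SignType, (s = -1 ↔ t = -1) → (s = 1 ↔ t = 1) → s = t := by decide
  exact funext fun i => eq_of_iff _ _ (h.1 i) (h.2 i)

lemma mem_range_signSupports {p : Finset ι × Finset ι} :
    p ∈ Set.range signSupports ↔ Disjoint p.1 p.2 := by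
  constructor
  · rintro ⟨ε, rfl⟩
    simp +contextual [signSupports, disjoint_left]
  · intro h
    classical
    refine ⟨fun i => if i ∈ p.1 then -1 else if i ∈ p.2 then 1 else 0, ?_⟩
    have notMem_snd := fun i (hi : i ∈ p.1) => disjoint_left.1 h hi
    ext i <;> simp only [signSupports, mem_filter_univ] <;> split_ifs <;> simp_all

lemma sum_sign_mul_eq_usum_sub_usum {k : ℕ} (m : Fin k → ℕ) (ε : Fin k → SignType) :
    ∑ i, (ε i : ℤ) * m i = (usum m (signSupports ε).2 : ℤ) - usum m (signSupports ε).1 := by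
  simp only [usum, signSupports, sum_filter]
  push_cast
  rw [← sum_sub_distrib]
  refine sum_congr rfl fun i _ => ?_
  cases ε i <;> simp

end SignSupports

section SignedRepresentations

variable {ι : Type*} [Fintype ι] [DecidableEq ι]

/-- The number of signed representations of `N` by the weights `w`: the ways to write `N` as
`∑ i, ε i * w i` with every digit `ε i` in `{-1, 0, 1}`. -/
def signedRepCount (w : ι → ℤ) (N : ℤ) : ℕ :=
  #{ε : ι → SignType | ∑ i, (ε i : ℤ) * w i = N}

lemma signedRepCount_neg (w : ι → ℤ) (N : ℤ) : signedRepCount w (-N) = signedRepCount w N :=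
  card_equiv (Equiv.neg _) fun ε => by
    simp [sum_neg_distrib, neg_eq_iff_eq_neg]

lemma signedRepCount_const_mul {d : ℤ} (hd : d ≠ 0) (w : ι → ℤ) (N : ℤ) :
    signedRepCount (fun i => d * w i) (d * N) = signedRepCount w N := by
  simp only [signedRepCount, mul_left_comm _ d, ← mul_sum, mul_right_inj' hd]

lemma signedRepCount_const_mul_of_not_dvd {d N : ℤ} (hN : ¬d ∣ N) (w : ι → ℤ) :
    signedRepCount (fun i => d * w i) N = 0 := by
  simp only [signedRepCount, mul_left_comm _ d, ← mul_sum, card_eq_zero, filter_eq_empty_iff]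
  rintro ε - rfl
  exact hN (dvd_mul_right d _)

lemma signedRepCount_eq_add_removeNth {k : ℕ} (w : Fin (k + 1) → ℤ) (p : Fin (k + 1)) (N : ℤ) :
    signedRepCount w N = signedRepCount (p.removeNth w) (N - w p) +
      signedRepCount (p.removeNth w) N + signedRepCount (p.removeNth w) (N + w p) := by
  have sum_digit : signedRepCount w N =
      ∑ s : SignType, signedRepCount (p.removeNth w) (N - s * w p) := by
    simp only [signedRepCount, card_filter]
    rw [← (Fin.insertNthEquiv (fun _ => SignType) p).sum_comp, Fintype.sum_prod_type]
    simp [Fin.sum_univ_succAbove _ p, eq_sub_iff_add_eq', Fin.removeNth_apply]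
  rw [sum_digit, SignType.univ_eq, sum_insert (by decide), sum_pair (by decide)]
  simp only [SignType.coe_zero, SignType.coe_neg_one, SignType.coe_one, zero_mul, neg_mul, one_mul,
    sub_zero, sub_neg_eq_add]
  ring

lemma ncard_disjoint_usum_eq_usum_add {k : ℕ} (m : Fin k → ℕ) (d : ℕ) :
    {p : Finset (Fin k) × Finset (Fin k) |
      Disjoint p.1 p.2 ∧ usum m p.2 = usum m p.1 + d}.ncard =
      signedRepCount (fun i => (m i : ℤ)) d := by
  have image_eq : {p : Finset (Fin k) × Finset (Fin k) |
      Disjoint p.1 p.2 ∧ usum m p.2 = usum m p.1 + d} =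
      signSupports '' ({ε | ∑ i, (ε i : ℤ) * m i = d} : Finset (Fin k → SignType)) := by
    ext p
    simp only [Set.mem_ofPred_eq, ← mem_range_signSupports, Set.mem_image, coe_filter_univ,
      sum_sign_mul_eq_usum_sub_usum]
    constructor
    · rintro ⟨⟨ε, rfl⟩, h⟩
      exact ⟨ε, by omega, rfl⟩
    · rintro ⟨ε, h, rfl⟩
      exact ⟨⟨ε, rfl⟩, by omega⟩
  rw [image_eq, Set.ncard_image_of_injective _ signSupports_injective, Set.ncard_coe_finset,
    signedRepCount]

end SignedRepresentations

section SignedBinary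

/-- The number of representations of `N` by `k` binary digits from `{-1, 0, 1}`. -/
def signedBinaryCount (k : ℕ) (N : ℤ) : ℕ :=
  signedRepCount (fun i : Fin k => (2 : ℤ) ^ (i : ℕ)) N

lemma signedBinaryCount_succ (k : ℕ) (N : ℤ) :
    signedBinaryCount (k + 1) N =
      signedRepCount (fun i : Fin k => 2 * (2 : ℤ) ^ (i : ℕ)) (N - 1) +
      signedRepCount (fun i : Fin k => 2 * (2 : ℤ) ^ (i : ℕ)) N +
      signedRepCount (fun i : Fin k => 2 * (2 : ℤ) ^ (i : ℕ)) (N + 1) := by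
  have tail_eq : Fin.removeNth 0 (fun i : Fin (k + 1) => (2 : ℤ) ^ (i : ℕ)) =
      fun i : Fin k => 2 * (2 : ℤ) ^ (i : ℕ) := by
    ext i
    simp [Fin.removeNth_apply, pow_succ']
  rw [signedBinaryCount, signedRepCount_eq_add_removeNth _ 0, tail_eq, Fin.val_zero, pow_zero]

lemma signedBinaryCount_two_mul (k : ℕ) (N : ℤ) :
    signedBinaryCount (k + 1) (2 * N) = signedBinaryCount k N := by
  rw [signedBinaryCount_succ, signedRepCount_const_mul_of_not_dvd (by omega),
    signedRepCount_const_mul two_ne_zero, signedRepCount_const_mul_of_not_dvd (by omega),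
    zero_add, add_zero, signedBinaryCount]

lemma signedBinaryCount_two_mul_add_one (k : ℕ) (N : ℤ) :
    signedBinaryCount (k + 1) (2 * N + 1) =
      signedBinaryCount k N + signedBinaryCount k (N + 1) := by
  rw [signedBinaryCount_succ, signedRepCount_const_mul_of_not_dvd (N := 2 * N + 1) (by omega),
    add_sub_cancel_right, show 2 * N + 1 + 1 = 2 * (N + 1) by ring,
    signedRepCount_const_mul two_ne_zero, signedRepCount_const_mul two_ne_zero, add_zero,
    signedBinaryCount, signedBinaryCount]

lemma signedBinaryCount_zero_right (k : ℕ) : signedBinaryCount k 0 = 1 := by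
  induction k with
  | zero => simp [signedBinaryCount, signedRepCount]
  | succ k ih => simpa [ih] using signedBinaryCount_two_mul k 0

end SignedBinary

section Jacobsthal

lemma three_mul_qn (n : ℕ) : 3 * (qn n : ℤ) = 2 ^ n - (-1) ^ n := by
  have three_dvd : (3 : ℤ) ∣ 2 ^ n - (-1) ^ n := sub_dvd_pow_sub_pow 2 (-1) n
  have hpos := Nat.one_le_two_pow (n := n)
  have hcast : ((2 ^ n : ℕ) : ℤ) = 2 ^ n := Nat.cast_pow 2 n
  rw [← hcast] at three_dvd ⊢
  rw [qn]
  rcases Nat.even_or_odd n with hn | hn <;> rw [hn.neg_one_pow] at three_dvd ⊢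
  · rw [if_neg (by grind)]
    omega
  · rw [if_pos (by grind)]
    omega

lemma qn_succ (n : ℕ) : (qn (n + 1) : ℤ) = 2 * qn n + (-1) ^ n := by
  have h := three_mul_qn n
  have hsucc := three_mul_qn (n + 1)
  rw [pow_succ, pow_succ] at hsucc
  linarith

lemma odd_qn_succ (n : ℕ) : Odd (qn (n + 1)) := by
  rw [← Int.odd_coe_nat, qn_succ]
  exact (even_two_mul _).add_odd (Odd.pow (by decide))

lemma qn_le_two_pow (n : ℕ) : qn n ≤ 2 ^ n := by
  have h := three_mul_qn n
  have hpos : (1 : ℤ) ≤ 2 ^ n := one_le_pow₀ one_le_two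
  zify
  rcases neg_one_pow_eq_or ℤ n with hsign | hsign <;> rw [hsign] at h <;> linarith

lemma signedBinaryCount_qn_add_two (n k : ℕ) :
    signedBinaryCount (k + 2) (qn (n + 2)) =
      signedBinaryCount k (qn n) + signedBinaryCount (k + 1) (qn (n + 1)) := by
  have h := qn_succ n
  have hsucc := qn_succ (n + 1)
  rw [pow_succ] at hsucc
  rw [← signedBinaryCount_two_mul k]
  rcases neg_one_pow_eq_or ℤ n with hsign | hsign <;> rw [hsign] at h hsucc
  · rw [show (qn (n + 2) : ℤ) = 2 * (2 * qn n) + 1 by linarith,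
      signedBinaryCount_two_mul_add_one, h]
  · rw [show (qn (n + 2) : ℤ) = 2 * qn (n + 1) + 1 by linarith,
      signedBinaryCount_two_mul_add_one, show (qn (n + 1) : ℤ) + 1 = 2 * qn n by linarith,
      add_comm]

lemma signedBinaryCount_qn (n : ℕ) : signedBinaryCount (n + 1) (qn n) = Nat.fib (n + 2) := by
  induction n using Nat.twoStepInduction with
  | zero => simp [qn, signedBinaryCount_zero_right]
  | one => decide
  | more n ih ih_succ =>
    rw [signedBinaryCount_qn_add_two, ih, ih_succ, Nat.fib_add_two (n := n + 2)]

end Jacobsthal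

section SubsetSums

lemma usum_eq_add_usum_removeNth {k : ℕ} (m : Fin (k + 1) → ℕ) (p : Fin (k + 1))
    (A : Finset (Fin (k + 1))) :
    usum m A = (if p ∈ A then m p else 0) + usum (p.removeNth m) {i | p.succAbove i ∈ A} := by
  simp only [usum, sum_filter, Fin.removeNth_apply]
  rw [← Fin.sum_univ_succAbove (fun i => if i ∈ A then m i else 0) p, sum_ite_mem, univ_inter]

lemma mem_range_usum_iff_removeNth {k : ℕ} (m : Fin (k + 1) → ℕ) (p : Fin (k + 1)) (x : ℕ) :
    x ∈ Set.range (usum m) ↔ ∃ y ∈ Set.range (usum (p.removeNth m)), x = y ∨ x = m p + y := by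
  constructor
  · rintro ⟨A, rfl⟩
    refine ⟨_, ⟨univ.filter fun i => p.succAbove i ∈ A, rfl⟩, ?_⟩
    rw [usum_eq_add_usum_removeNth m p A]
    split_ifs <;> simp
  · rintro ⟨_, ⟨T, rfl⟩, rfl | rfl⟩
    · exact ⟨T.map p.succAboveEmb, by simp [usum, Fin.removeNth_apply]⟩
    · exact ⟨insert p (T.map p.succAboveEmb), by simp [usum, Fin.removeNth_apply]⟩

lemma usum_two_pow_injective (n : ℕ) :
    Function.Injective (usum fun i : Fin n => 2 ^ (i : ℕ)) := by
  intro A B h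
  refine map_injective Fin.valEmbedding (geomSum_injective le_rfl ?_)
  simpa [usum] using h

lemma usum_two_pow_lt {n : ℕ} (A : Finset (Fin n)) :
    usum (fun i : Fin n => 2 ^ (i : ℕ)) A < 2 ^ n := by
  have h := Nat.geomSum_lt (s := A.map Fin.valEmbedding) (n := n) le_rfl (by simp)
  simpa [usum] using h

lemma range_usum_two_pow (n : ℕ) :
    Set.range (usum fun i : Fin n => 2 ^ (i : ℕ)) = Set.Iio (2 ^ n) := by
  refine Set.eq_of_subset_of_ncard_le (Set.range_subset_iff.2 usum_two_pow_lt) ?_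
  rw [← Set.image_univ, Set.ncard_image_of_injective _ (usum_two_pow_injective n)]
  simp

end SubsetSums

section InsertBinaryWeights

/-- The utility vector on `Fin (n + 1)` obtained from `2, 4, …, 2 ^ n` by inserting the weight `q`
at position `p`, which shifts the weights from `p` on by one index. It is meant for odd `q`, and
`mvec n` is the case `p = n - 2`, `q = qn n`. -/
def insertBinaryWeights (n : ℕ) (p : Fin (n + 1)) (q : ℕ) : Fin (n + 1) → ℕ :=
  p.insertNth (α := fun _ => ℕ) q fun i => 2 ^ ((i : ℕ) + 1)

variable {n q : ℕ} {p : Fin (n + 1)}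

lemma usum_insertBinaryWeights (A : Finset (Fin (n + 1))) :
    usum (insertBinaryWeights n p q) A = (if p ∈ A then q else 0) +
      2 * usum (fun i : Fin n => 2 ^ (i : ℕ)) {i | p.succAbove i ∈ A} := by
  rw [usum_eq_add_usum_removeNth _ p]
  simp [insertBinaryWeights, usum, mul_sum, pow_succ']

lemma odd_usum_insertBinaryWeights_iff (hq : Odd q) (A : Finset (Fin (n + 1))) :
    Odd (usum (insertBinaryWeights n p q) A) ↔ p ∈ A := by
  rw [usum_insertBinaryWeights]
  split_ifs with hp <;> simp [hp, hq, parity_simps]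

lemma usum_insertBinaryWeights_injective (hq : Odd q) :
    Function.Injective (usum (insertBinaryWeights n p q)) := by
  intro A B h
  have hp : p ∈ A ↔ p ∈ B := by
    rw [← odd_usum_insertBinaryWeights_iff hq, h, odd_usum_insertBinaryWeights_iff hq]
  have hbinary : univ.filter (p.succAbove · ∈ A) = univ.filter (p.succAbove · ∈ B) := by
    simp only [usum_insertBinaryWeights, hp, add_right_inj] at h
    exact usum_two_pow_injective n (Nat.eq_of_mul_eq_mul_left two_pos h)
  ext i
  rcases Fin.eq_self_or_eq_succAbove p i with rfl | ⟨j, rfl⟩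
  · exact hp
  · simpa using Finset.ext_iff.1 hbinary j

lemma mem_range_usum_insertBinaryWeights_iff (hq : Odd q) (x : ℕ) :
    x ∈ Set.range (usum (insertBinaryWeights n p q)) ↔
      Even x ∧ x < 2 ^ (n + 1) ∨ Odd x ∧ q ≤ x ∧ x < q + 2 ^ (n + 1) := by
  have removeNth_eq : p.removeNth (insertBinaryWeights n p q) =
      fun i : Fin n => 2 * 2 ^ (i : ℕ) := by
    simp [insertBinaryWeights, pow_succ']
  have range_eq : Set.range (usum fun i : Fin n => 2 * 2 ^ (i : ℕ)) =
      (2 * ·) '' Set.Iio (2 ^ n) := by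
    rw [← range_usum_two_pow, ← Set.range_comp]
    exact congrArg Set.range (funext fun A => (mul_sum _ _ _).symm)
  rw [mem_range_usum_iff_removeNth _ p, removeNth_eq, range_eq, Set.exists_mem_image]
  simp only [insertBinaryWeights, Fin.insertNth_apply_same, Set.mem_Iio]
  rw [Nat.odd_iff] at hq
  rw [Nat.even_iff, Nat.odd_iff, pow_succ']
  constructor
  · rintro ⟨y, hy, rfl | rfl⟩ <;> omega
  · rintro (⟨hx, hlt⟩ | ⟨hx, hge, hlt⟩)
    · exact ⟨x / 2, by omega, by omega⟩
    · exact ⟨(x - q) / 2, by omega, by omega⟩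

lemma eq_add_one_or_eq_add_two_of_adjacent_usum (hq : Odd q) (hle : q ≤ 2 ^ (n + 1)) {x y : ℕ}
    (hy : y ∈ Set.range (usum (insertBinaryWeights n p q))) (hxy : x < y)
    (hadj : ∀ z ∈ Set.range (usum (insertBinaryWeights n p q)), ¬(x < z ∧ z < y)) :
    y = x + 1 ∨ y = x + 2 := by
  have hadj_one := hadj (x + 1)
  have hadj_two := hadj (x + 2)
  simp only [mem_range_usum_insertBinaryWeights_iff hq, Nat.even_iff, Nat.odd_iff]
    at hy hadj_one hadj_two
  rw [Nat.odd_iff] at hq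
  omega

/- An odd value below `2 ^ (n + 1)` can only be missed by being less than `q`. -/
lemma add_add_one_mem_range_usum_of_add_one_notMem (hq : Odd q) (hle : q ≤ 2 ^ n) {x : ℕ}
    (heven : Even x) (hx : x ∈ Set.range (usum (insertBinaryWeights n p q)))
    (hgap : x + 1 ∉ Set.range (usum (insertBinaryWeights n p q))) :
    x + q + 1 ∈ Set.range (usum (insertBinaryWeights n p q)) := by
  rw [mem_range_usum_insertBinaryWeights_iff hq] at hx hgap ⊢
  rw [Nat.odd_iff] at hq
  simp only [Nat.even_iff, Nat.odd_iff] at heven hx hgap ⊢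
  omega

lemma flippable_insertBinaryWeights_iff (hq : Odd q) (hle : q ≤ 2 ^ n)
    (A B : Finset (Fin (n + 1))) :
    Flippable (uord (insertBinaryWeights n p q)) A B ↔
      Disjoint A B ∧
        usum (insertBinaryWeights n p q) B = usum (insertBinaryWeights n p q) A + 1 := by
  rw [flippable_uord_iff (usum_insertBinaryWeights_injective hq)]
  constructor
  · rintro ⟨hdisj, hlt, hadj⟩
    have hcrit : ∀ x ∈ Set.range (usum (insertBinaryWeights n p q)),
        ¬(usum (insertBinaryWeights n p q) A < x ∧ x < usum (insertBinaryWeights n p q) B) := by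
      simpa [usum] using hadj ∅ (disjoint_empty_left _)
    refine ⟨hdisj, (eq_add_one_or_eq_add_two_of_adjacent_usum hq (by omega) ⟨B, rfl⟩ hlt
      hcrit).resolve_right fun htwo => ?_⟩
    have hmem : p ∈ A ↔ p ∈ B := by
      rw [← odd_usum_insertBinaryWeights_iff hq, ← odd_usum_insertBinaryWeights_iff hq, htwo]
      simp [parity_simps]
    have hpA : p ∉ A := fun h => disjoint_left.1 hdisj h (hmem.1 h)
    have hpB : p ∉ B := mt hmem.2 hpA
    have heven : Even (usum (insertBinaryWeights n p q) A) := by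
      rwa [← Nat.not_odd_iff_even, odd_usum_insertBinaryWeights_iff hq]
    have hbetween := add_add_one_mem_range_usum_of_add_one_notMem hq hle heven ⟨A, rfl⟩
      fun h => hcrit _ h (by omega)
    have hsingleton : usum (insertBinaryWeights n p q) {p} = q := by
      simp [usum, insertBinaryWeights]
    exact hadj {p} (by simp [hpA, hpB]) _ hbetween (by omega)
  · rintro ⟨hdisj, hsucc⟩
    exact ⟨hdisj, by omega, fun D _ x _ => by omega⟩

lemma signedRepCount_insertBinaryWeights_one (hq : Odd q) :
    signedRepCount (fun i => (insertBinaryWeights n p q i : ℤ)) 1 =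
      signedBinaryCount (n + 1) q := by
  have removeNth_eq : p.removeNth (fun i => (insertBinaryWeights n p q i : ℤ)) =
      fun i : Fin n => 2 * (2 : ℤ) ^ (i : ℕ) := by
    ext i
    simp [insertBinaryWeights, Fin.removeNth_apply, pow_succ']
  rw [signedRepCount_eq_add_removeNth _ p, removeNth_eq, signedBinaryCount_succ,
    signedRepCount_const_mul_of_not_dvd (N := 1) (by decide),
    signedRepCount_const_mul_of_not_dvd (N := q) (by grind), ← signedRepCount_neg _ (1 - _)]
  simp only [insertBinaryWeights, Fin.insertNth_apply_same, neg_sub, add_comm (1 : ℤ)]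

lemma ncard_flippablePairs_insertBinaryWeights (hq : Odd q) (hle : q ≤ 2 ^ n) :
    (FlippablePairs (uord (insertBinaryWeights n p q))).ncard = signedBinaryCount (n + 1) q := by
  simp only [FlippablePairs, flippable_insertBinaryWeights_iff hq hle]
  rw [ncard_disjoint_usum_eq_usum_add, Nat.cast_one, signedRepCount_insertBinaryWeights_one hq]

end InsertBinaryWeights

lemma mvec_eq_insertBinaryWeights {n : ℕ} (hn : 2 ≤ n) :
    mvec n = insertBinaryWeights n ⟨n - 2, by omega⟩ (qn n) := by
  rw [insertBinaryWeights, Fin.eq_insertNth_iff]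
  constructor
  · grind [mvec]
  · ext i
    have hi := i.isLt
    simp only [mvec, Fin.removeNth_apply, Fin.succAbove, Fin.lt_def]
    grind

/-- For `n ≥ 3`, the utility vector `mvec n` on `[n+1]` has pairwise distinct
subset sums, induces a comparative probability order, and this order has exactly
`F_{n+2}` flippable pairs. -/
theorem stmt4 {n : ℕ} (hn : 3 ≤ n) :
    (∀ A B : Finset (Fin (n + 1)), usum (mvec n) A = usum (mvec n) B → A = B) ∧
    IsCPO (uord (mvec n)) ∧
    (FlippablePairs (uord (mvec n))).ncard = Nat.fib (n + 2) := by
  obtain ⟨k, rfl⟩ : ∃ k, n = k + 1 := ⟨n - 1, by omega⟩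
  have hodd : Odd (qn (k + 1)) := odd_qn_succ k
  rw [mvec_eq_insertBinaryWeights (by omega)]
  have hinj := usum_insertBinaryWeights_injective (n := k + 1) (p := ⟨k + 1 - 2, by omega⟩) hodd
  refine ⟨fun A B h => hinj h, isCPO_uord_of_injective hinj, ?_⟩
  rw [ncard_flippablePairs_insertBinaryWeights hodd (qn_le_two_pow _), signedBinaryCount_qn]
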